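/- Let L be a complete orthomodular lattice, let B ⊆ L be closed under sInf of arbitrary subsets, and let B' ⊆ B be closed under sInf of arbitrary subsets and under the orthocomplementation x ↦ xᗮ. Assume the distributive laws p ⊓ (q ⊔ r) = (p ⊓ q) ⊔ (p ⊓ r) and p ⊔ (q ⊓ r) = (p ⊔ q) ⊓ (p ⊔ r) hold for all p, q, r ∈ B. If a is an atom of B (i.e., a ∈ B, a ≠ ⊥, and every y ∈ B with y < a equals ⊥), then δ_{B'}(a) is an atom of B' (i.e., δ_{B'}(a) ≠ ⊥ and every y ∈ B' with y < δ_{B'}(a) equals ⊥). -/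

import Mathlib

/-- The daseinisation of `x` to a subset `B` of a complete lattice:
`δ_B(x) := sInf {y ∈ B | x ≤ y}`. -/
def das {L : Type*} [CompleteLattice L] (B : Set L) (x : L) : L :=
  sInf {y ∈ B | x ≤ y}

/-! Let `y ∈ B'` lie strictly below `δ_{B'}(a)`. Then `y` does not lie above `a`, so `y ⊓ a = ⊥`
because `a` is an atom of `B`, and distributivity places `a` below a complement `z ∈ B'` of `y`.
Hence `y ≤ δ_{B'}(a) ≤ z`, while `y ⊓ z = ⊥`, so that `y = ⊥`. -/

theorem infClosed_of_forall_sInf_mem {α : Type*} [CompleteLattice α] {s : Set α}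
    (hs : ∀ t ⊆ s, sInf t ∈ s) : InfClosed s := by
  intro x hx y hy
  rw [← sInf_pair]
  exact hs _ (Set.pair_subset hx hy)

section Das

variable {L : Type*} [CompleteLattice L] {B : Set L} {x y : L}

theorem le_das : x ≤ das B x :=
  le_sInf fun _ hy => hy.2

theorem das_le_iff (hy : y ∈ B) : das B x ≤ y ↔ x ≤ y :=
  ⟨le_das.trans, fun hxy => sInf_le ⟨hy, hxy⟩⟩

end Das

theorem disjoint_of_not_le_of_forall_lt_eq_bot {α : Type*} [SemilatticeInf α] [OrderBot α]
    {s : Set α} (hs : InfClosed s) {a y : α} (ha : a ∈ s) (hatom : ∀ x ∈ s, x < a → x = ⊥)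
    (hy : y ∈ s) (hay : ¬a ≤ y) : Disjoint a y :=
  disjoint_iff.mpr (hatom _ (hs ha hy) (inf_lt_left.mpr hay))

theorem le_of_disjoint_of_codisjoint_of_inf_sup_le {α : Type*} [Lattice α] [BoundedOrder α]
    {a y z : α} (hdist : a ⊓ (y ⊔ z) ≤ a ⊓ y ⊔ a ⊓ z) (hay : Disjoint a y)
    (hyz : Codisjoint y z) : a ≤ z := by
  rw [hyz.eq_top, inf_top_eq, hay.eq_bot, bot_sup_eq] at hdist
  exact hdist.trans inf_le_right

theorem das_atom_isAtom_general {L : Type*} [CompleteLattice L] {B B' : Set L} (hsub : B' ⊆ B)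
    (hB : InfClosed B) (hcompl : ∀ y ∈ B', ∃ z ∈ B', IsCompl y z) {a : L}
    (hdist : ∀ y ∈ B', ∀ z ∈ B', a ⊓ (y ⊔ z) ≤ a ⊓ y ⊔ a ⊓ z)
    (haB : a ∈ B) (haBot : a ≠ ⊥) (hatom : ∀ y ∈ B, y < a → y = ⊥) :
    das B' a ≠ ⊥ ∧ ∀ y ∈ B', y < das B' a → y = ⊥ := by
  refine ⟨ne_bot_of_le_ne_bot haBot le_das, fun y hy hlt => ?_⟩
  obtain ⟨z, hz, hyz⟩ := hcompl y hy
  have hay : ¬a ≤ y := fun h => hlt.not_ge ((das_le_iff hy).mpr h)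
  have hdisj : Disjoint a y := disjoint_of_not_le_of_forall_lt_eq_bot hB haB hatom (hsub hy) hay
  have haz : a ≤ z :=
    le_of_disjoint_of_codisjoint_of_inf_sup_le (hdist y hy z hz) hdisj hyz.codisjoint
  have hyz_le : y ≤ z := hlt.le.trans ((das_le_iff hz).mpr haz)
  exact hyz.disjoint.eq_bot_of_le hyz_le

/-- In a complete orthomodular lattice, if `B' ⊆ B` are closed under `sInf`,
`B'` is closed under orthocomplementation, the distributive laws hold on `B`,
and `a` is an atom of `B`, then `δ_{B'}(a)` is an atom of `B'`. -/
theorem das_atom_isAtom {L : Type*} [CompleteLattice L] (oc : L → L)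
    (h_inf : ∀ x : L, x ⊓ oc x = ⊥) (h_sup : ∀ x : L, x ⊔ oc x = ⊤)
    (h_anti : ∀ x y : L, x ≤ y → oc y ≤ oc x) (h_inv : ∀ x : L, oc (oc x) = x)
    (h_om : ∀ x y : L, x ≤ y → y = x ⊔ (y ⊓ oc x))
    (B B' : Set L) (hsub : B' ⊆ B)
    (hInfB : ∀ S ⊆ B, sInf S ∈ B)
    (hInfB' : ∀ S ⊆ B', sInf S ∈ B')
    (hocB' : ∀ b ∈ B', oc b ∈ B')
    (hdist1 : ∀ p ∈ B, ∀ q ∈ B, ∀ r ∈ B, p ⊓ (q ⊔ r) = (p ⊓ q) ⊔ (p ⊓ r))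
    (hdist2 : ∀ p ∈ B, ∀ q ∈ B, ∀ r ∈ B, p ⊔ (q ⊓ r) = (p ⊔ q) ⊓ (p ⊔ r))
    (a : L) (haB : a ∈ B) (haBot : a ≠ ⊥) (hatom : ∀ y ∈ B, y < a → y = ⊥) :
    das B' a ≠ ⊥ ∧ ∀ y ∈ B', y < das B' a → y = ⊥ :=
  das_atom_isAtom_general hsub (infClosed_of_forall_sInf_mem hInfB)
    (fun y hy => ⟨oc y, hocB' y hy, IsCompl.of_eq (h_inf y) (h_sup y)⟩)
    (fun y hy z hz => (hdist1 a haB y (hsub hy) z (hsub hz)).le) haB haBot hatom
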